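/- arXiv:1808.05976 — 4 statements merged into one kernel-verified Lean document; each statement's English description precedes it below -/
import Mathlib

section
/- For every dimension n ≥ 1, every exponent p ∈ (1,∞) and every δ ≥ 0 there exists a positive constant a₁ = a₁(p,n,δ) such that for all vectors ξ, η ∈ ℝⁿ one has | |ξ|^{p−2} ξ − |η|^{p−2} η | ≤ a₁ · |ξ − η|^{1−δ} · ( |ξ| + |η| )^{p−2+δ}. -/
open scoped RealInnerProductSpace

lemma aux_scalar (q t : ℝ) (hq : -1 < q) (ht : 0 < t) (ht1 : t ≤ 1) :
    |1 - t ^ q| * t ≤ (1 + |q|) * (1 - t) := by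
  have h1t : 0 ≤ 1 - t := by linarith
  rcases lt_or_ge q 0 with h | h
  · have h1 : 1 ≤ t ^ q := Real.one_le_rpow_of_pos_of_le_one_of_nonpos ht ht1 h.le
    have h2 : t ^ q * t ≤ 1 := by
      have := Real.rpow_le_one ht.le ht1 (by linarith : 0 ≤ q + 1)
      rwa [Real.rpow_add_one ht.ne'] at this
    rw [abs_of_nonpos (by linarith)]
    nlinarith [mul_nonneg (abs_nonneg q) h1t]
  · have h1 : t ^ q ≤ 1 := Real.rpow_le_one ht.le ht1 h
    rw [abs_of_nonneg (by linarith), abs_of_nonneg h]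
    have h3 : 1 - t ^ q ≤ (1 + q) * (1 - t) := by
      rcases le_total 1 q with h4 | h4
      · have := one_add_mul_self_le_rpow_one_add (s := t - 1) (by linarith) h4
        rw [add_sub_cancel] at this
        nlinarith
      · have := Real.rpow_le_rpow_of_exponent_ge ht ht1 h4
        rw [Real.rpow_one] at this
        nlinarith [mul_nonneg h h1t]
    nlinarith

lemma aux_pow (q a b : ℝ) (ha : 0 < a) (hb : 0 ≤ b) (hba : b ≤ a) :
    a ^ q ≤ 2 ^ |q| * (a + b) ^ q := by
  rcases lt_or_ge q 0 with h | h
  · have h1 : (2 * a) ^ q ≤ (a + b) ^ q :=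
      Real.rpow_le_rpow_of_nonpos (by linarith) (by linarith) h.le
    rw [Real.mul_rpow (by norm_num) ha.le] at h1
    rw [abs_of_neg h]
    calc a ^ q = 2 ^ (-q) * (2 ^ q * a ^ q) := by
          rw [← mul_assoc, ← Real.rpow_add (by norm_num)]; simp
      _ ≤ _ := by gcongr
  · have h1 : a ^ q ≤ (a + b) ^ q := by gcongr; linarith
    have h2 : (1 : ℝ) ≤ 2 ^ |q| := Real.one_le_rpow (by norm_num) (abs_nonneg q)
    have h3 : 0 ≤ (a + b) ^ q := by positivity
    nlinarith

lemma aux_vec {E : Type*} [NormedAddCommGroup E] [NormedSpace ℝ E] (q : ℝ) (hq : -1 < q)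
    (x y : E) (hx : 0 < ‖x‖) (hyx : ‖y‖ ≤ ‖x‖) :
    ‖(‖x‖ ^ q) • x - (‖y‖ ^ q) • y‖ ≤
      2 ^ |q| * (2 + |q|) * ‖x - y‖ * (‖x‖ + ‖y‖) ^ q := by
  have key : |‖x‖ ^ q - ‖y‖ ^ q| * ‖y‖ ≤ ‖x‖ ^ q * ((1 + |q|) * ‖x - y‖) := by
    rcases (norm_nonneg y).eq_or_lt with h | h
    · rw [← h, mul_zero]; positivity
    · obtain ⟨t, ht⟩ : ∃ t, t = ‖y‖ / ‖x‖ := ⟨_, rfl⟩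
      have hy : ‖y‖ = ‖x‖ * t := by rw [ht]; field_simp
      have ht0 : 0 < t := by rw [ht]; positivity
      have ht1 : t ≤ 1 := by rw [ht]; exact (div_le_one hx).2 hyx
      have hs := aux_scalar q t hq ht0 ht1
      have hd := norm_sub_norm_le x y
      have hpos : 0 ≤ ‖x‖ ^ q := by positivity
      have e : |‖x‖ ^ q - ‖y‖ ^ q| * ‖y‖ = ‖x‖ ^ q * (‖x‖ * (|1 - t ^ q| * t)) := by
        rw [hy, Real.mul_rpow hx.le ht0.le, ← mul_one_sub, abs_mul, abs_of_nonneg hpos]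
        ring
      rw [e]
      refine mul_le_mul_of_nonneg_left ?_ hpos
      calc ‖x‖ * (|1 - t ^ q| * t) ≤ ‖x‖ * ((1 + |q|) * (1 - t)) := by gcongr
        _ = (1 + |q|) * (‖x‖ - ‖y‖) := by rw [hy]; ring
        _ ≤ _ := by gcongr
  have hp := aux_pow q ‖x‖ ‖y‖ hx (norm_nonneg y) hyx
  calc ‖(‖x‖ ^ q) • x - (‖y‖ ^ q) • y‖
      = ‖(‖x‖ ^ q) • (x - y) + (‖x‖ ^ q - ‖y‖ ^ q) • y‖ := by
        congr 1; rw [smul_sub, sub_smul]; abel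
    _ ≤ ‖x‖ ^ q * ‖x - y‖ + |‖x‖ ^ q - ‖y‖ ^ q| * ‖y‖ := by
        refine (norm_add_le _ _).trans (le_of_eq ?_)
        rw [norm_smul, norm_smul, Real.norm_eq_abs, Real.norm_eq_abs,
          abs_of_nonneg (by positivity : 0 ≤ ‖x‖ ^ q)]
    _ ≤ ‖x‖ ^ q * ((2 + |q|) * ‖x - y‖) := by linarith
    _ ≤ (2 ^ |q| * (‖x‖ + ‖y‖) ^ q) * ((2 + |q|) * ‖x - y‖) := by gcongr
    _ = _ := by ring

/-- For every dimension `n ≥ 1`, exponent `p ∈ (1,∞)` and `δ ≥ 0` there is a positive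
constant `a₁` such that `| |ξ|^{p-2} ξ − |η|^{p-2} η | ≤ a₁ |ξ − η|^{1−δ} (|ξ|+|η|)^{p−2+δ}`
for all `ξ, η ∈ ℝⁿ`. -/
theorem vector_inequality_one
    (n : ℕ) (hn : 1 ≤ n) (p δ : ℝ) (hp : 1 < p) (hδ : 0 ≤ δ) :
    ∃ a₁ : ℝ, 0 < a₁ ∧
      ∀ ξ η : EuclideanSpace ℝ (Fin n),
        ‖(‖ξ‖ ^ (p - 2)) • ξ - (‖η‖ ^ (p - 2)) • η‖ ≤
          a₁ * ‖ξ - η‖ ^ (1 - δ) * (‖ξ‖ + ‖η‖) ^ (p - 2 + δ) := by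
  refine ⟨2 ^ |p - 2| * (2 + |p - 2|), by positivity, fun ξ η => ?_⟩
  by_cases hne : ξ = η
  · subst hne
    rw [sub_self, norm_zero]; positivity
  have hd : 0 < ‖ξ - η‖ := norm_pos_iff.2 (sub_ne_zero.2 hne)
  have hdS : ‖ξ - η‖ ≤ ‖ξ‖ + ‖η‖ := norm_sub_le _ _
  have hS : 0 < ‖ξ‖ + ‖η‖ := hd.trans_le hdS
  have h0 : ‖(‖ξ‖ ^ (p - 2)) • ξ - (‖η‖ ^ (p - 2)) • η‖ ≤
      2 ^ |p - 2| * (2 + |p - 2|) * ‖ξ - η‖ * (‖ξ‖ + ‖η‖) ^ (p - 2) := by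
    rcases le_total ‖η‖ ‖ξ‖ with h | h
    · exact aux_vec (p - 2) (by linarith) ξ η (by linarith) h
    · rw [norm_sub_rev, norm_sub_rev ξ η, add_comm ‖ξ‖ ‖η‖]
      exact aux_vec (p - 2) (by linarith) η ξ (by linarith) h
  refine h0.trans ?_
  rw [mul_assoc, mul_assoc _ (‖ξ - η‖ ^ (1 - δ))]
  refine mul_le_mul_of_nonneg_left ?_ (by positivity)
  have h1 : ‖ξ - η‖ ^ δ ≤ (‖ξ‖ + ‖η‖) ^ δ := by gcongr
  calc ‖ξ - η‖ * (‖ξ‖ + ‖η‖) ^ (p - 2)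
      = ‖ξ - η‖ ^ (1 - δ) * ((‖ξ‖ + ‖η‖) ^ (p - 2) * ‖ξ - η‖ ^ δ) := by
        rw [mul_left_comm, ← Real.rpow_add hd]; simp [mul_comm]
    _ ≤ ‖ξ - η‖ ^ (1 - δ) * ((‖ξ‖ + ‖η‖) ^ (p - 2) * (‖ξ‖ + ‖η‖) ^ δ) := by gcongr
    _ = _ := by rw [← Real.rpow_add hS]
end

section
/- For every dimension n ≥ 1, every exponent p ∈ (1,∞) and every δ ≥ 0 there exists a positive constant a₂ = a₂(p,n,δ) such that for all vectors ξ, η ∈ ℝⁿ one has |ξ − η|^{2+δ} · ( |ξ| + |η| )^{p−2−δ} ≤ a₂ · ⟨ |ξ|^{p−2} ξ − |η|^{p−2} η , ξ − η ⟩, where ⟨·,·⟩ is the Euclidean inner product. -/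
open scoped RealInnerProductSpace

lemma vi_scalar_lt (p a b s : ℝ) (hp : 1 < p) (hp2 : p < 2) (ha : 0 < a) (hb : 0 ≤ b)
    (hab : b ≤ a) (hs : s ≤ a * b) (hs' : b = 0 → s = 0) :
    (p - 1) * (a ^ 2 + b ^ 2 - 2 * s) * (a + b) ^ (p - 2) ≤
      a ^ (p - 2) * a ^ 2 + b ^ (p - 2) * b ^ 2 - (a ^ (p - 2) + b ^ (p - 2)) * s := by
  have hAC : (a + b) ^ (p - 2) ≤ a ^ (p - 2) :=
    Real.rpow_le_rpow_of_nonpos ha (by linarith) (by linarith)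
  have hC : 0 < (a + b) ^ (p - 2) := by positivity
  rcases hb.eq_or_lt with h0 | hb
  · subst h0
    rw [hs' rfl]
    simp only [add_zero, mul_zero, sub_zero] at *
    have : 0 ≤ a ^ 2 * a ^ (p - 2) := by positivity
    nlinarith
  · have hBC : (a + b) ^ (p - 2) ≤ b ^ (p - 2) :=
      Real.rpow_le_rpow_of_nonpos hb (by linarith) (by linarith)
    have hbern := rpow_one_add_le_one_add_mul_self (s := b / a - 1) (p := p - 1)
      (by have : 0 < b / a := by positivity
          linarith) (by linarith) (by linarith)
    rw [show 1 + (b / a - 1) = b / a by ring, Real.div_rpow hb.le ha.le] at hbern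
    have ea : a ^ (p - 1) = a ^ (p - 2) * a := by
      rw [← Real.rpow_add_one ha.ne']; congr 1; ring
    have eb : b ^ (p - 1) = b ^ (p - 2) * b := by
      rw [← Real.rpow_add_one hb.ne']; congr 1; ring
    rw [ea, eb] at hbern
    generalize a ^ (p - 2) = A at *
    generalize b ^ (p - 2) = B at *
    generalize (a + b) ^ (p - 2) = C at *
    have hA : 0 < A := by linarith
    rw [div_le_iff₀ (by positivity)] at hbern
    have e : (1 + (p - 1) * (b / a - 1)) * (A * a) = A * a + (p - 1) * A * (b - a) := by
      field_simp
    rw [e] at hbern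
    have h1 : (p - 1) * A * (a - b) * (a - b) ≤ (A * a - B * b) * (a - b) :=
      mul_le_mul_of_nonneg_right (by linarith) (by linarith)
    have h2 : (p - 1) * C * (a - b) ^ 2 ≤ (p - 1) * A * (a - b) ^ 2 := by
      have : 0 ≤ p - 1 := by linarith
      gcongr
    have h3 : (p - 1) * (2 * C) ≤ A + B := by nlinarith
    have h4 : (p - 1) * (2 * C) * (a * b - s) ≤ (A + B) * (a * b - s) :=
      mul_le_mul_of_nonneg_right h3 (by linarith)
    nlinarith

lemma vi_scalar_ge (p a b s : ℝ) (hp2 : 2 ≤ p) (ha : 0 < a) (hb : 0 ≤ b)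
    (hab : b ≤ a) (hs : s ≤ a * b) :
    (1 / 2 * (1 / 2) ^ (p - 2)) * (a ^ 2 + b ^ 2 - 2 * s) * (a + b) ^ (p - 2) ≤
      a ^ (p - 2) * a ^ 2 + b ^ (p - 2) * b ^ 2 - (a ^ (p - 2) + b ^ (p - 2)) * s := by
  have h1 : (1 / 2 : ℝ) ^ (p - 2) * (a + b) ^ (p - 2) ≤ a ^ (p - 2) := by
    rw [← Real.mul_rpow (by norm_num) (by linarith)]
    exact Real.rpow_le_rpow (by linarith) (by linarith) (by linarith)
  have h2 : b ^ (p - 2) ≤ a ^ (p - 2) := Real.rpow_le_rpow hb hab (by linarith)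
  have h3 : 0 ≤ b ^ (p - 2) := by positivity
  generalize a ^ (p - 2) = A at *
  generalize b ^ (p - 2) = B at *
  generalize (a + b) ^ (p - 2) = C at *
  generalize (1 / 2 : ℝ) ^ (p - 2) = K at *
  have hD : 0 ≤ a ^ 2 + b ^ 2 - 2 * s := by nlinarith [sq_nonneg (a - b)]
  have h4 : K * C * (a ^ 2 + b ^ 2 - 2 * s) ≤ (A + B) * (a ^ 2 + b ^ 2 - 2 * s) :=
    mul_le_mul_of_nonneg_right (by linarith) hD
  have h5 : 0 ≤ (A - B) * (a ^ 2 - b ^ 2) :=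
    mul_nonneg (by linarith) (by nlinarith)
  nlinarith

lemma vi_scalar (p : ℝ) (hp : 1 < p) : ∃ c : ℝ, 0 < c ∧ ∀ a b s : ℝ, 0 < a → 0 ≤ b →
    b ≤ a → s ≤ a * b → (b = 0 → s = 0) →
    c * (a ^ 2 + b ^ 2 - 2 * s) * (a + b) ^ (p - 2) ≤
      a ^ (p - 2) * a ^ 2 + b ^ (p - 2) * b ^ 2 - (a ^ (p - 2) + b ^ (p - 2)) * s := by
  rcases lt_or_ge p 2 with h | h
  · exact ⟨p - 1, by linarith, fun a b s h1 h2 h3 h4 h5 =>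
      vi_scalar_lt p a b s hp h h1 h2 h3 h4 h5⟩
  · exact ⟨1 / 2 * (1 / 2) ^ (p - 2), by positivity, fun a b s h1 h2 h3 h4 _ =>
      vi_scalar_ge p a b s h h1 h2 h3 h4⟩

/-- For every dimension `n ≥ 1`, exponent `p ∈ (1,∞)` and `δ ≥ 0` there is a positive
constant `a₂` such that
`|ξ − η|^{2+δ} (|ξ|+|η|)^{p−2−δ} ≤ a₂ ⟨|ξ|^{p-2} ξ − |η|^{p-2} η, ξ − η⟩`
for all `ξ, η ∈ ℝⁿ`. -/
theorem vector_inequality_two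
    (n : ℕ) (hn : 1 ≤ n) (p δ : ℝ) (hp : 1 < p) (hδ : 0 ≤ δ) :
    ∃ a₂ : ℝ, 0 < a₂ ∧
      ∀ ξ η : EuclideanSpace ℝ (Fin n),
        ‖ξ - η‖ ^ (2 + δ) * (‖ξ‖ + ‖η‖) ^ (p - 2 - δ) ≤
          a₂ * ⟪(‖ξ‖ ^ (p - 2)) • ξ - (‖η‖ ^ (p - 2)) • η, ξ - η⟫ := by
  obtain ⟨c, hc, H⟩ := vi_scalar p hp
  refine ⟨c⁻¹, by positivity, ?_⟩
  have key : ∀ ξ η : EuclideanSpace ℝ (Fin n), ‖η‖ ≤ ‖ξ‖ →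
      ‖ξ - η‖ ^ (2 + δ) * (‖ξ‖ + ‖η‖) ^ (p - 2 - δ) ≤
          c⁻¹ * ⟪(‖ξ‖ ^ (p - 2)) • ξ - (‖η‖ ^ (p - 2)) • η, ξ - η⟫ := by
    intro ξ η hle
    rcases (norm_nonneg ξ).eq_or_lt with h0 | ha
    · have hξ : ξ = 0 := norm_eq_zero.1 h0.symm
      have hη : η = 0 := norm_le_zero_iff.1 (by linarith)
      subst hξ hη
      have : (2 + δ) ≠ 0 := by linarith
      simp [Real.zero_rpow this]
    · have hS : 0 < ‖ξ‖ + ‖η‖ := by positivity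
      have h := H ‖ξ‖ ‖η‖ ⟪ξ, η⟫ ha (norm_nonneg _) hle (real_inner_le_norm _ _)
        (fun h => by rw [norm_eq_zero.1 h, inner_zero_right])
      have e1 : ⟪(‖ξ‖ ^ (p - 2)) • ξ - (‖η‖ ^ (p - 2)) • η, ξ - η⟫ =
          ‖ξ‖ ^ (p - 2) * ‖ξ‖ ^ 2 + ‖η‖ ^ (p - 2) * ‖η‖ ^ 2
            - (‖ξ‖ ^ (p - 2) + ‖η‖ ^ (p - 2)) * ⟪ξ, η⟫ := by
        rw [inner_sub_left, inner_sub_right, inner_sub_right]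
        simp only [real_inner_smul_left, real_inner_self_eq_norm_sq, real_inner_comm ξ η]
        ring
      have e2 : ‖ξ - η‖ ^ 2 = ‖ξ‖ ^ 2 + ‖η‖ ^ 2 - 2 * ⟪ξ, η⟫ := by
        rw [norm_sub_sq_real]; ring
      rw [e1]
      rw [← e2] at h
      have h6 : ‖ξ - η‖ ^ (2 + δ) * (‖ξ‖ + ‖η‖) ^ (p - 2 - δ) ≤
          ‖ξ - η‖ ^ 2 * (‖ξ‖ + ‖η‖) ^ (p - 2) := by
        rw [Real.rpow_add_of_nonneg (norm_nonneg _) (by norm_num) hδ, Real.rpow_two]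
        calc _ ≤ ‖ξ - η‖ ^ 2 * (‖ξ‖ + ‖η‖) ^ δ * (‖ξ‖ + ‖η‖) ^ (p - 2 - δ) := by
              gcongr
              exact norm_sub_le _ _
          _ = _ := by
              rw [mul_assoc, ← Real.rpow_add hS]; congr 2; ring
      refine h6.trans ?_
      rw [le_inv_mul_iff₀ hc]
      linarith
  intro ξ η
  rcases le_total ‖η‖ ‖ξ‖ with h | h
  · exact key ξ η h
  · have := key η ξ h
    rw [norm_sub_rev, add_comm ‖η‖] at this
    refine this.trans_eq ?_
    rw [← inner_neg_neg, neg_sub, neg_sub]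
end

section
/- (Babuška–Lax–Milgram) Let X and Y be reflexive real Banach spaces and let B : X × Y → ℝ be a continuous bilinear form satisfying: (i) B is non-degenerate in the second variable, i.e. for every nonzero y ∈ Y there exists x ∈ X with B(x,y) ≠ 0; and (ii) there is a constant c > 0 such that c · ‖x‖_X ≤ sup_{y ∈ Y, ‖y‖_Y ≤ 1} |B(x,y)| for every x ∈ X. Then for every continuous linear functional ℓ on Y there exists a unique x ∈ X such that B(x,y) = ℓ(y) for all y ∈ Y; moreover this solution satisfies c · ‖x‖_X ≤ ‖ℓ‖_{Y'}. -/
open NormedSpace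

/-- **Babuška–Lax–Milgram.** Let `X` and `Y` be reflexive real Banach spaces and
`B : X × Y → ℝ` a continuous bilinear form that is non-degenerate in the second
variable and satisfies the inf-sup condition `c ‖x‖ ≤ sup_{‖y‖ ≤ 1} |B(x,y)|`.
Then for every `ℓ ∈ Y'` there is a unique `x ∈ X` with `B(x,·) = ℓ`, and
`c ‖x‖ ≤ ‖ℓ‖`. -/
theorem babuska_lax_milgram
    {X Y : Type*} [NormedAddCommGroup X] [NormedSpace ℝ X] [CompleteSpace X]
    [NormedAddCommGroup Y] [NormedSpace ℝ Y] [CompleteSpace Y]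
    (hXrefl : Function.Surjective (inclusionInDoubleDual ℝ X))
    (hYrefl : Function.Surjective (inclusionInDoubleDual ℝ Y))
    (B : X →L[ℝ] Y →L[ℝ] ℝ)
    (hnondeg : ∀ y : Y, y ≠ 0 → ∃ x : X, B x y ≠ 0)
    (c : ℝ) (hc : 0 < c)
    (hinfsup : ∀ x : X, c * ‖x‖ ≤ ⨆ y : {y : Y // ‖y‖ ≤ 1}, |B x y|) :
    ∀ ℓ : Y →L[ℝ] ℝ, ∃ x : X,
      (∀ y : Y, B x y = ℓ y) ∧ c * ‖x‖ ≤ ‖ℓ‖ ∧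
        ∀ x' : X, (∀ y : Y, B x' y = ℓ y) → x' = x := by
  have hb : ∀ x : X, c * ‖x‖ ≤ ‖B x‖ := by
    intro x
    refine (hinfsup x).trans ?_
    have : Nonempty {y : Y // ‖y‖ ≤ 1} := ⟨⟨0, by simp⟩⟩
    refine ciSup_le fun y => ?_
    have h := (B x).le_opNorm (y : Y)
    rw [Real.norm_eq_abs] at h
    exact h.trans (mul_le_of_le_one_right (norm_nonneg _) y.2)
  have hanti : AntilipschitzWith (Real.toNNReal c⁻¹) B := by
    refine AddMonoidHomClass.antilipschitz_of_bound B fun x => ?_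
    rw [Real.coe_toNNReal _ (inv_pos.2 hc).le, ← div_eq_inv_mul, le_div_iff₀ hc, mul_comm]
    exact hb x
  have hclosed : IsClosed (Set.range B) := hanti.isClosed_range B.uniformContinuous
  have hconv : Convex ℝ (Set.range B) := by
    rintro _ ⟨x, rfl⟩ _ ⟨z, rfl⟩ a b _ _ _
    exact ⟨a • x + b • z, by simp⟩
  intro ℓ
  have hmem : ℓ ∈ Set.range B := by
    by_contra hn
    obtain ⟨f, u, hfu, hu⟩ := geometric_hahn_banach_point_closed hconv hclosed hn
    have hu0 : u < 0 := by simpa using hu (B 0) ⟨0, rfl⟩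
    have hf0 : ∀ x, f (B x) = 0 := by
      intro x
      by_contra hne
      have h := hu (B ((u / f (B x)) • x)) ⟨_, rfl⟩
      rw [map_smul, map_smul, smul_eq_mul, div_mul_cancel₀ _ hne] at h
      exact lt_irrefl _ h
    obtain ⟨y, rfl⟩ := hYrefl f
    have hy : y = 0 := by
      by_contra hy
      obtain ⟨x, hx⟩ := hnondeg y hy
      exact hx (by simpa using hf0 x)
    subst hy
    simp at hfu
    linarith
  obtain ⟨x, rfl⟩ := hmem
  exact ⟨x, fun _ => rfl, hb x, fun x' h => hanti.injective (ContinuousLinearMap.ext h)⟩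
end

section
/- Let u : ℝ³ → ℝ³ be a smooth (C^∞) compactly supported vector field with div u(x) = 0 for every x ∈ ℝ³. Then there exists a smooth vector field A : ℝ³ → ℝ³ such that curl A(x) = u(x) and div A(x) = 0 for every x ∈ ℝ³. -/
open MeasureTheory

/-- The partial derivative `∂ᵢ uⱼ` of a vector field `u : ℝ³ → ℝ³`, computed from the
Fréchet derivative. -/
noncomputable def pderivComp (u : EuclideanSpace ℝ (Fin 3) → EuclideanSpace ℝ (Fin 3))
    (i j : Fin 3) (x : EuclideanSpace ℝ (Fin 3)) : ℝ :=
  fderiv ℝ u x (EuclideanSpace.single i 1) j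

/-- The divergence of a vector field `u : ℝ³ → ℝ³`, computed from the Fréchet
derivative: `div u = ∂₁u₁ + ∂₂u₂ + ∂₃u₃`. -/
noncomputable def vecDiv (u : EuclideanSpace ℝ (Fin 3) → EuclideanSpace ℝ (Fin 3))
    (x : EuclideanSpace ℝ (Fin 3)) : ℝ :=
  ∑ i : Fin 3, fderiv ℝ u x (EuclideanSpace.single i 1) i

/-- The curl of a vector field `u : ℝ³ → ℝ³`:
`curl u = (∂₂u₃ − ∂₃u₂, ∂₃u₁ − ∂₁u₃, ∂₁u₂ − ∂₂u₁)`. -/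
noncomputable def vecCurl (u : EuclideanSpace ℝ (Fin 3) → EuclideanSpace ℝ (Fin 3))
    (x : EuclideanSpace ℝ (Fin 3)) : EuclideanSpace ℝ (Fin 3) :=
  (WithLp.equiv 2 (Fin 3 → ℝ)).symm
    ![pderivComp u 1 2 x - pderivComp u 2 1 x,
      pderivComp u 2 0 x - pderivComp u 0 2 x,
      pderivComp u 0 1 x - pderivComp u 1 0 x]

open scoped FourierTransform SchwartzMap LineDeriv

abbrev E3 := EuclideanSpace ℝ (Fin 3)

lemma integrableOn_inv_norm : IntegrableOn (fun v : E3 => ‖v‖⁻¹) (Metric.ball 0 1) := by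
  rw [integrableOn_fun_norm_addHaar volume (f := fun y => y⁻¹)]
  have h : IntegrableOn (fun y : ℝ => y) (Set.Ioo 0 1) :=
    (continuous_id.integrableOn_Icc (a := (0:ℝ)) (b := 1)).mono_set Set.Ioo_subset_Icc_self
  refine h.congr_fun (fun y hy => ?_) measurableSet_Ioo
  have : y ≠ 0 := hy.1.ne'
  simp
  field_simp

lemma schwartz_int (S : 𝓢(E3, ℂ)) (n : ℕ) :
    Integrable (fun v : E3 => ‖v‖ ^ n * (‖v‖⁻¹ * ‖S v‖)) := by
  have hm : AEStronglyMeasurable (fun v : E3 => ‖v‖ ^ n * (‖v‖⁻¹ * ‖S v‖)) volume := by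
    have := S.continuous.measurable
    exact Measurable.aestronglyMeasurable (by fun_prop)
  rcases n with _ | n
  · obtain ⟨C, hC⟩ := S.decay 0 0
    have h1 : Integrable ((Metric.ball (0:E3) 1).indicator (fun v : E3 => C * ‖v‖⁻¹)) :=
      (integrable_indicator_iff measurableSet_ball).2 (integrableOn_inv_norm.const_mul C)
    refine (h1.add S.integrable.norm).mono' hm (Filter.Eventually.of_forall fun v => ?_)
    have h2 := hC.2 v
    simp at h2
    simp only [pow_zero, one_mul, norm_mul, norm_inv, norm_norm, Pi.add_apply]
    by_cases hv : v ∈ Metric.ball (0:E3) 1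
    · rw [Set.indicator_of_mem hv]
      have : ‖v‖⁻¹ * ‖S v‖ ≤ ‖v‖⁻¹ * C := by gcongr
      nlinarith [norm_nonneg (S v)]
    · rw [Set.indicator_of_notMem hv]
      have : 1 ≤ ‖v‖ := by simpa using hv
      have := inv_le_one_of_one_le₀ this
      nlinarith [norm_nonneg (S v)]
  · refine (S.integrable_pow_mul volume n).mono' hm (Filter.Eventually.of_forall fun v => ?_)
    rw [Real.norm_of_nonneg (by positivity)]
    by_cases hv : ‖v‖ = 0
    · simp [hv]; positivity
    · rw [pow_succ]; field_simp; rfl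

lemma fderiv_fourier_coord (g : E3 → ℂ) (h0 : Integrable g)
    (h1 : Integrable (fun v => ‖v‖ * ‖g v‖)) (x : E3) (m : Fin 3) :
    fderiv ℝ (𝓕 g) x (EuclideanSpace.single m 1) =
      𝓕 (fun v : E3 => -(2 * Real.pi * Complex.I) * ((v m : ℂ) * g v)) x := by
  rw [Real.fderiv_fourier h0 h1, Real.fourier_continuousLinearMap_apply]
  · refine congrFun (congrArg _ (funext fun v => ?_)) x
    have hin : (innerSL ℝ v) (EuclideanSpace.single m 1 : E3) = v m := by
      refine (innerSL_apply_apply ℝ v _).trans ?_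
      simp [EuclideanSpace.inner_single_right]
    rw [VectorFourier.fourierSMulRight_apply, hin]
    simp
  · refine (h1.const_mul (2 * Real.pi * ‖innerSL ℝ (E := E3)‖)).mono'
      h0.aestronglyMeasurable.fourierSMulRight (Filter.Eventually.of_forall fun v => ?_)
    have := VectorFourier.norm_fourierSMulRight_le (innerSL ℝ (E := E3)) g v
    linarith

lemma fourier_sum3 (g : Fin 3 → E3 → ℂ) (h : ∀ i, Integrable (g i)) (x : E3) :
    ∑ i, 𝓕 (g i) x = 𝓕 (fun v => ∑ i, g i v) x := by
  simp only [Real.fourier_eq, Finset.smul_sum]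
  rw [integral_finsetSum]
  intro i _
  exact (Real.fourierIntegral_convergent_iff x).2 (h i)

/-- Main analytic input: `P a b = ∂ₐ Φ_b` with `-ΔΦ = u`. -/
lemma exists_potential (f : Fin 3 → 𝓢(E3, ℂ))
    (hdiv : ∀ x, ∑ i, fderiv ℝ (f i) x (EuclideanSpace.single i 1) = 0) :
    ∃ P : Fin 3 → Fin 3 → E3 → ℂ, (∀ a b, ContDiff ℝ (⊤ : ℕ∞) (P a b)) ∧
      (∀ m a b x, fderiv ℝ (P a b) x (EuclideanSpace.single m 1) =
        fderiv ℝ (P m b) x (EuclideanSpace.single a 1)) ∧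
      (∀ b x, ∑ a, fderiv ℝ (P a b) x (EuclideanSpace.single a 1) = - f b x) ∧
      (∀ m x, ∑ b, fderiv ℝ (P b b) x (EuclideanSpace.single m 1) = 0) := by
  set F : Fin 3 → 𝓢(E3, ℂ) := fun b => 𝓕⁻ (f b) with hF
  have hFf : ∀ b x, 𝓕 (F b : E3 → ℂ) x = f b x := by
    intro b x
    rw [← SchwartzMap.fourier_coe, hF]
    simp
  have hFdiv : ∀ v : E3, ∑ b, (v b : ℂ) * F b v = 0 := by
    intro v
    have h1 : ∑ i, ∂_{(EuclideanSpace.single i 1 : E3)} (f i) = 0 := by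
      ext x
      simpa [sum_apply, SchwartzMap.lineDerivOp_apply_eq_fderiv] using hdiv x
    have h2 : ∑ i, 𝓕⁻ (∂_{(EuclideanSpace.single i 1 : E3)} (f i)) = 0 := by
      have := congrArg (FourierTransform.fourierInvₗ ℂ 𝓢(E3,ℂ)) h1
      simpa using this
    simp only [SchwartzMap.fourierInv_lineDerivOp_eq, ← Finset.smul_sum] at h2
    have h3 := (smul_eq_zero.1 h2).resolve_left (by simp [Real.pi_ne_zero])
    have h4 := congrArg (fun S : 𝓢(E3,ℂ) => S v) h3
    have : ∀ i : Fin 3, (fun w : E3 => inner ℝ w (EuclideanSpace.single i 1 : E3)).HasTemperateGrowth :=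
      fun i => by fun_prop
    simp only [sum_apply, SchwartzMap.smulLeftCLM_apply_apply (this _)] at h4
    simpa [EuclideanSpace.inner_single_right] using h4
  have hpi : (2 * Real.pi * Complex.I : ℂ) ≠ 0 := by simp [Real.pi_ne_zero]
  set G : Fin 3 → Fin 3 → E3 → ℂ := fun a b v =>
    (2 * Real.pi * Complex.I : ℂ)⁻¹ * ((v a : ℂ) * ((‖v‖ ^ 2 : ℝ) : ℂ)⁻¹ * F b v) with hG
  have hcoord : ∀ (v : E3) a, |v a| ≤ ‖v‖ := fun v a => by
    simpa using PiLp.norm_apply_le v a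
  have hGm : ∀ a b, Measurable (G a b) := fun a b => by
    have := (F b).continuous.measurable
    simp only [hG]
    fun_prop
  have hGb : ∀ a b v, ‖G a b v‖ ≤ ‖(2 * Real.pi * Complex.I : ℂ)⁻¹‖ * (‖v‖⁻¹ * ‖F b v‖) := by
    intro a b v
    simp only [hG]
    rw [norm_mul, norm_mul, norm_mul, norm_inv ((‖v‖ ^ 2 : ℝ) : ℂ), Complex.norm_real, Complex.norm_real]
    gcongr
    rw [Real.norm_eq_abs, norm_pow, norm_norm]
    by_cases hv : ‖v‖ = 0
    · simp [hv]
    · calc |v a| * (‖v‖ ^ 2)⁻¹ ≤ ‖v‖ * (‖v‖ ^ 2)⁻¹ := by gcongr; exact hcoord v a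
        _ = ‖v‖⁻¹ := by field_simp
  have hGi : ∀ a b (n : ℕ), Integrable (fun v => ‖v‖ ^ n * ‖G a b v‖) := by
    intro a b n
    refine ((schwartz_int (F b) n).const_mul ‖(2 * Real.pi * Complex.I : ℂ)⁻¹‖).mono' ?_
      (Filter.Eventually.of_forall fun v => ?_)
    · have := hGm a b
      exact Measurable.aestronglyMeasurable (by fun_prop)
    · rw [Real.norm_of_nonneg (by positivity)]
      have := mul_le_mul_of_nonneg_left (hGb a b v) (by positivity : 0 ≤ ‖v‖ ^ n)
      linarith
  have hG0 : ∀ a b, Integrable (G a b) := fun a b =>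
    (integrable_norm_iff (hGm a b).aestronglyMeasurable).1 (by simpa using hGi a b 0)
  set H : Fin 3 → Fin 3 → Fin 3 → E3 → ℂ := fun m a b v =>
    -((v m : ℂ) * (v a : ℂ) * ((‖v‖ ^ 2 : ℝ) : ℂ)⁻¹ * F b v) with hH
  have hd : ∀ m a b x, fderiv ℝ (𝓕 (G a b)) x (EuclideanSpace.single m 1) = 𝓕 (H m a b) x := by
    intro m a b x
    rw [fderiv_fourier_coord _ (hG0 a b) (by simpa using hGi a b 1)]
    refine congrFun (congrArg _ (funext fun v => ?_)) x
    simp only [hG, hH]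
    field_simp
  have hHi : ∀ m a b, Integrable (H m a b) := by
    intro m a b
    refine (F b).integrable.norm.mono' ?_ (Filter.Eventually.of_forall fun v => ?_)
    · have := (F b).continuous.measurable
      simp only [hH]
      exact Measurable.aestronglyMeasurable (by fun_prop)
    · simp only [hH]
      rw [norm_neg, norm_mul, norm_mul, norm_mul, norm_inv, Complex.norm_real, Complex.norm_real,
        Complex.norm_real, norm_pow, norm_norm, Real.norm_eq_abs, Real.norm_eq_abs]
      by_cases hv : ‖v‖ = 0
      · simp [hv]
      · have : |v m| * |v a| * (‖v‖ ^ 2)⁻¹ ≤ ‖v‖ * ‖v‖ * (‖v‖ ^ 2)⁻¹ := by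
          gcongr <;> exact hcoord v _
        have h2 : ‖v‖ * ‖v‖ * (‖v‖ ^ 2)⁻¹ = 1 := by field_simp
        rw [h2] at this
        nlinarith [norm_nonneg (F b v)]
  refine ⟨fun a b => 𝓕 (G a b), fun a b => ?_, fun m a b x => ?_, fun b x => ?_, fun m x => ?_⟩
  · exact Real.contDiff_fourier (fun n _ => hGi a b n)
  · rw [hd, hd]
    refine congrFun (congrArg _ (funext fun v => ?_)) x
    simp only [hH]
    ring
  · simp only [hd]
    rw [fourier_sum3 (fun a => H a a b) (fun a => hHi a a b), ← hFf b x, Real.fourier_eq, Real.fourier_eq,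
      ← integral_neg]
    refine integral_congr_ae ?_
    have h0 : ∀ᵐ v : E3, v ≠ 0 := by simp [ae_iff]
    filter_upwards [h0] with v hv
    rw [← smul_neg]
    congr 1
    have hn : ((‖v‖ ^ 2 : ℝ) : ℂ) = ∑ a, (v a : ℂ) * (v a : ℂ) := by
      rw [EuclideanSpace.real_norm_sq_eq]
      push_cast
      simp only [pow_two]
    have hn0 : ((‖v‖ ^ 2 : ℝ) : ℂ) ≠ 0 := by simpa using hv
    simp only [hH, Finset.sum_neg_distrib, ← Finset.sum_mul]
    rw [← hn, mul_inv_cancel₀ hn0, one_mul]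
  · simp only [hd]
    rw [fourier_sum3 (fun b => H m b b) (fun b => hHi m b b)]
    have : (fun v => ∑ b, H m b b v) = fun _ => 0 := by
      ext v
      have := hFdiv v
      rw [Fin.sum_univ_three] at this ⊢
      simp only [hH]
      linear_combination (-((v m : ℂ) * ((‖v‖ ^ 2 : ℝ) : ℂ)⁻¹)) * this
    rw [this, Real.fourier_eq]
    simp

/-- A smooth compactly supported divergence-free vector field on `ℝ³` admits a smooth
divergence-free vector potential: `u = curl A` with `div A = 0`. -/
theorem divergence_free_has_vector_potential
    (u : EuclideanSpace ℝ (Fin 3) → EuclideanSpace ℝ (Fin 3))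
    (hu : ContDiff ℝ (⊤ : ℕ∞) u) (huc : HasCompactSupport u)
    (hdiv : ∀ x, vecDiv u x = 0) :
    ∃ A : EuclideanSpace ℝ (Fin 3) → EuclideanSpace ℝ (Fin 3),
      ContDiff ℝ (⊤ : ℕ∞) A ∧ (∀ x, vecCurl A x = u x) ∧ ∀ x, vecDiv A x = 0 := by
  let L : Fin 3 → E3 →L[ℝ] ℂ := fun i => Complex.ofRealCLM.comp (EuclideanSpace.proj i)
  have hc : ∀ i, HasCompactSupport (fun x => L i (u x)) := fun i =>
    huc.comp_left (g := L i) (map_zero _)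
  have hs : ∀ i, ContDiff ℝ (⊤ : ℕ∞) (fun x => L i (u x)) := fun i => (L i).contDiff.comp hu
  let f : Fin 3 → 𝓢(E3, ℂ) := fun i => (hc i).toSchwartzMap (hs i)
  have hfu : ∀ i x, f i x = (u x i : ℂ) := fun i x => rfl
  have hud : Differentiable ℝ u := hu.differentiable (by simp)
  obtain ⟨P, hP, hsym, hlap, hd⟩ := exists_potential f (by
    intro x
    have h : ∀ i : Fin 3, fderiv ℝ (f i) x (EuclideanSpace.single i 1) =
        ((fderiv ℝ u x (EuclideanSpace.single i 1) i : ℝ) : ℂ) := by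
      intro i
      have : HasFDerivAt (f i) ((L i).comp (fderiv ℝ u x)) x :=
        (L i).hasFDerivAt.comp x (hud x).hasFDerivAt
      rw [this.fderiv]
      rfl
    simp only [h]
    rw [← Complex.ofReal_sum]
    exact_mod_cast hdiv x)
  let A : E3 → E3 := fun x => WithLp.toLp 2
    ![(P 1 2 x - P 2 1 x).re, (P 2 0 x - P 0 2 x).re, (P 0 1 x - P 1 0 x).re]
  have hA : ContDiff ℝ (⊤ : ℕ∞) A := by
    rw [contDiff_euclidean]
    intro i
    have key : ∀ a b, ContDiff ℝ (⊤ : ℕ∞) (fun x => (P a b x - P b a x).re) := fun a b =>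
      Complex.reCLM.contDiff.comp ((hP a b).sub (hP b a))
    fin_cases i
    · exact key 1 2
    · exact key 2 0
    · exact key 0 1
  have hAd : Differentiable ℝ A := hA.differentiable (by simp)
  have hPd : ∀ a b, Differentiable ℝ (P a b) := fun a b => (hP a b).differentiable (by simp)
  have hcomp : ∀ (k a b : Fin 3), (∀ x, A x k = (P a b x - P b a x).re) → ∀ x w,
      fderiv ℝ A x w k = (fderiv ℝ (P a b) x w).re - (fderiv ℝ (P b a) x w).re := by
    intro k a b h x w
    have h1 : HasFDerivAt (fun x => A x k)
        ((EuclideanSpace.proj (𝕜 := ℝ) k).comp (fderiv ℝ A x)) x :=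
      (EuclideanSpace.proj (𝕜 := ℝ) k).hasFDerivAt.comp x (hAd x).hasFDerivAt
    have h2 : HasFDerivAt (fun x => A x k)
        (Complex.reCLM.comp (fderiv ℝ (P a b) x - fderiv ℝ (P b a) x)) x := by
      rw [funext h]
      exact Complex.reCLM.hasFDerivAt.comp x
        ((hPd a b x).hasFDerivAt.sub (hPd b a x).hasFDerivAt)
    have := congrArg (fun T : E3 →L[ℝ] ℝ => T w) (h1.unique h2)
    simpa using this
  have c0 := hcomp 0 1 2 (fun _ => rfl)
  have c1 := hcomp 1 2 0 (fun _ => rfl)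
  have c2 := hcomp 2 0 1 (fun _ => rfl)
  have hlap' : ∀ b x, ∑ a, (fderiv ℝ (P a b) x (EuclideanSpace.single a 1)).re = - u x b := by
    intro b x
    have := congrArg Complex.re (hlap b x)
    rw [hfu] at this
    simpa using this
  have hd' : ∀ m x, ∑ b, (fderiv ℝ (P b b) x (EuclideanSpace.single m 1)).re = 0 := by
    intro m x
    simpa using congrArg Complex.re (hd m x)
  have hsym' : ∀ m a b x, (fderiv ℝ (P a b) x (EuclideanSpace.single m 1)).re =
        (fderiv ℝ (P m b) x (EuclideanSpace.single a 1)).re := fun m a b x => by rw [hsym]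
  refine ⟨A, hA, fun x => ?_, fun x => ?_⟩
  · ext i
    have e1 := hlap' i x
    have e2 := hd' i x
    rw [Fin.sum_univ_three] at e1 e2
    fin_cases i
    · simp [vecCurl, pderivComp, c0, c1, c2] at e1 e2 ⊢
      linarith [hsym' 1 0 1 x, hsym' 2 0 2 x]
    · simp [vecCurl, pderivComp, c0, c1, c2] at e1 e2 ⊢
      linarith [hsym' 0 1 0 x, hsym' 2 1 2 x]
    · simp [vecCurl, pderivComp, c0, c1, c2] at e1 e2 ⊢
      linarith [hsym' 1 2 1 x, hsym' 0 2 0 x]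
  · rw [vecDiv, Fin.sum_univ_three, c0, c1, c2]
    linarith [hsym' 0 1 2 x, hsym' 0 2 1 x, hsym' 1 2 0 x]
end
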